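/- Let φ : X → ℝ be a continuous potential on X = 𝒜^(ℤ^d) such that Σ_{n≥1} n^{d−1} var_n φ < ∞. If there exist shift-invariant Borel probability measures μ, ν on X with ∫φ dμ ≠ ∫φ dν, then there exist n ≥ 1 and a pattern W : E_n → 𝒜 such that η([W]) = 0 for every maximizing measure η ∈ MM(φ). -/

import Mathlib

open MeasureTheory Filter Topology
open scoped ENNReal Classical

namespace Freezing

/-- The configuration space `X = 𝒜^(ℤ^d)`. -/
abbrev Cfg (d : ℕ) (A : Type) : Type := (Fin d → ℤ) → A

section Defs

variable {d : ℕ} {A : Type} [Fintype A] [TopologicalSpace A] [DiscreteTopology A]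
  [MeasurableSpace A] [BorelSpace A]

/-- The shift action: `(σ^n x)_m = x_{n+m}`. -/
def shift (n : Fin d → ℤ) (x : Cfg d A) : Cfg d A := fun m => x (n + m)

/-- Shift-invariance of a measure. -/
def Invariant (μ : Measure (Cfg d A)) : Prop :=
  ∀ n : Fin d → ℤ, Measure.map (shift n) μ = μ

/-- Cylinder set `[w]` for a pattern `w` on `E_n = ([0,n-1] ∩ ℤ)^d`. -/
def cylE (n : ℕ) (w : (Fin d → Fin n) → A) : Set (Cfg d A) :=
  { x | ∀ m : Fin d → Fin n, x (fun i => ((m i : ℕ) : ℤ)) = w m }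

/-- Measure-theoretic entropy `h(μ) = inf_{n ≥ 1} n^{-d} Σ_w (-μ[w] log μ[w])`. -/
noncomputable def entropy (μ : Measure (Cfg d A)) : ℝ :=
  ⨅ n : {n : ℕ // 1 ≤ n},
    ((n.1 : ℝ) ^ d)⁻¹ *
      ∑ w : (Fin d → Fin n.1) → A, Real.negMulLog (μ (cylE n.1 w)).toReal

/-- Pressure `p_φ(β) = sup { h(μ) + β ∫ φ dμ }` over shift-invariant probability measures. -/
noncomputable def pressure (φ : Cfg d A → ℝ) (β : ℝ) : ℝ :=
  sSup { r | ∃ μ : Measure (Cfg d A), IsProbabilityMeasure μ ∧ Invariant μ ∧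
    r = entropy μ + β * ∫ x, φ x ∂μ }

/-- The set of equilibrium states of `βφ`. -/
def ES (φ : Cfg d A → ℝ) (β : ℝ) : Set (Measure (Cfg d A)) :=
  { μ | IsProbabilityMeasure μ ∧ Invariant μ ∧
      entropy μ + β * ∫ x, φ x ∂μ = pressure φ β }

/-- `φ` has a freezing phase transition at `βc`. -/
def FreezingPT (φ : Cfg d A → ℝ) (βc : ℝ) : Prop :=
  (∀ β β' : ℝ, βc < β → βc < β' → ES φ β = ES φ β') ∧
  (∀ β β' : ℝ, β < βc → βc < β' → ES φ β ≠ ES φ β')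

/-- `s_φ = sup { ∫ φ dμ }` over shift-invariant probability measures. -/
noncomputable def sPhi (φ : Cfg d A → ℝ) : ℝ :=
  sSup { r | ∃ μ : Measure (Cfg d A), IsProbabilityMeasure μ ∧ Invariant μ ∧
    r = ∫ x, φ x ∂μ }

/-- The set of maximizing measures of `φ`. -/
def MM (φ : Cfg d A → ℝ) : Set (Measure (Cfg d A)) :=
  { μ | IsProbabilityMeasure μ ∧ Invariant μ ∧ (∫ x, φ x ∂μ) = sPhi φ }

/-- `h_φ = sup { h(η) : η ∈ MM(φ) }`. -/
noncomputable def hPhi (φ : Cfg d A → ℝ) : ℝ :=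
  sSup { r | ∃ μ ∈ MM φ, r = entropy μ }

/-- The zero-temperature accumulation points of `φ`. -/
def ZTA (φ : Cfg d A → ℝ) : Set (Measure (Cfg d A)) :=
  { μ | IsProbabilityMeasure μ ∧ Invariant μ ∧
      ∃ (β : ℕ → ℝ) (μs : ℕ → Measure (Cfg d A)),
        Tendsto β atTop atTop ∧ (∀ k, μs k ∈ ES φ (β k)) ∧
        ∀ f : Cfg d A → ℝ, Continuous f →
          Tendsto (fun k => ∫ x, f x ∂(μs k)) atTop (𝓝 (∫ x, f x ∂μ)) }

/-- A subshift: nonempty, closed, invariant under every shift. -/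
def IsSubshift (X₀ : Set (Cfg d A)) : Prop :=
  X₀.Nonempty ∧ IsClosed X₀ ∧ ∀ n : Fin d → ℤ, ∀ x ∈ X₀, shift n x ∈ X₀

/-- The language `L_{E_n}(X₀)`: patterns on `E_n` appearing at the origin of points of `X₀`. -/
def langE (X₀ : Set (Cfg d A)) (n : ℕ) : Set ((Fin d → Fin n) → A) :=
  { w | ∃ x ∈ X₀, ∀ m : Fin d → Fin n, x (fun i => ((m i : ℕ) : ℤ)) = w m }

/-- Topological entropy `h_top(X₀) = inf_{n ≥ 1} n^{-d} log |L_{E_n}(X₀)|`. -/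
noncomputable def topEnt (X₀ : Set (Cfg d A)) : ℝ :=
  ⨅ n : {n : ℕ // 1 ≤ n}, ((n.1 : ℝ) ^ d)⁻¹ * Real.log ((langE X₀ n.1).ncard)

/-- A measure of maximal entropy on the subshift `X₀`. -/
def IsMME (X₀ : Set (Cfg d A)) (μ : Measure (Cfg d A)) : Prop :=
  IsProbabilityMeasure μ ∧ Invariant μ ∧ μ X₀ = 1 ∧ entropy μ = topEnt X₀

/-- Ergodicity: invariant Borel sets have measure `0` or `1`. -/
def ErgodicInv (μ : Measure (Cfg d A)) : Prop :=
  ∀ s : Set (Cfg d A), MeasurableSet s → (∀ n : Fin d → ℤ, shift n ⁻¹' s = s) →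
    μ s = 0 ∨ μ s = 1

/-- The `n`-th variation `var_n φ`, over pairs agreeing on `B_n = ([-n,n] ∩ ℤ)^d`. -/
noncomputable def varPot (φ : Cfg d A → ℝ) (n : ℕ) : ℝ :=
  sSup { r | ∃ x y : Cfg d A,
    (∀ m : Fin d → ℤ, (∀ i, |m i| ≤ (n : ℤ)) → x m = y m) ∧ r = |φ x - φ y| }

/-- Sup-norm `‖m‖_∞` of a site `m ∈ ℤ^d`. -/
def supNorm (m : Fin d → ℤ) : ℕ := Finset.univ.sup fun i => (m i).natAbs

/-- The metric `dist(x,y) = 2^{-min{‖n‖_∞ : x_n ≠ y_n}}`. -/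
noncomputable def cfgDist (x y : Cfg d A) : ℝ :=
  if x = y then 0
  else (2 : ℝ) ^
    (-((sInf { k : ℕ | ∃ m : Fin d → ℤ, supNorm m = k ∧ x m ≠ y m } : ℕ) : ℤ))

/-- Distance from a point to a subshift. -/
noncomputable def distToSub (X₀ : Set (Cfg d A)) (x : Cfg d A) : ℝ :=
  sInf { r | ∃ y ∈ X₀, r = cfgDist x y }

end Defs


/-- The box `B_K`. -/
noncomputable def box (d K : ℕ) : Finset (Fin d → ℤ) :=
  Fintype.piFinset fun _ => Finset.Icc (-(K : ℤ)) K

lemma mem_box {d K : ℕ} {n : Fin d → ℤ} : n ∈ box d K ↔ ∀ i, |n i| ≤ (K : ℤ) := by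
  simp [box, Fintype.mem_piFinset, abs_le]

lemma card_box (d K : ℕ) : (box d K).card = (2 * K + 1) ^ d := by
  simp only [box, Fintype.card_piFinset, Int.card_Icc, Finset.prod_const, Finset.card_univ,
    Fintype.card_fin]
  congr 1
  omega

lemma mem_box_iff {d K : ℕ} {n : Fin d → ℤ} : n ∈ box d K ↔ supNorm n ≤ K := by
  rw [mem_box, supNorm, Finset.sup_le_iff]
  constructor
  · intro h i _
    have := h i
    rw [abs_le] at this
    omega
  · intro h i
    rw [abs_le]
    have := h i (Finset.mem_univ i)
    omega

lemma natAbs_le_supNorm {d : ℕ} (n : Fin d → ℤ) (i : Fin d) : (n i).natAbs ≤ supNorm n :=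
  Finset.le_sup (f := fun i => (n i).natAbs) (Finset.mem_univ i)

lemma exists_supNorm {d : ℕ} (hd : 1 ≤ d) (n : Fin d → ℤ) : ∃ i, (n i).natAbs = supNorm n := by
  haveI : Nonempty (Fin d) := ⟨⟨0, hd⟩⟩
  obtain ⟨i, -, hi⟩ := Finset.exists_mem_eq_sup Finset.univ Finset.univ_nonempty
    (fun i => (n i).natAbs)
  exact ⟨i, hi.symm⟩

lemma pow_diff_le (d : ℕ) (a b : ℝ) (hb : 0 ≤ b) (hab : b ≤ a) :
    a ^ (d + 1) - b ^ (d + 1) ≤ (d + 1) * (a - b) * a ^ d := by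
  induction d with
  | zero => simp
  | succ d ih =>
    have h1 : b ^ (d + 1) ≤ a ^ (d + 1) := pow_le_pow_left₀ hb hab _
    have ha : 0 ≤ a := hb.trans hab
    have h2 := mul_le_mul_of_nonneg_left ih ha
    have h3 := mul_le_mul_of_nonneg_left h1 (sub_nonneg.2 hab)
    push_cast
    have e1 : a ^ (d + 1 + 1) - b ^ (d + 1 + 1)
      = a * (a ^ (d + 1) - b ^ (d + 1)) + (a - b) * b ^ (d + 1) := by ring
    rw [e1]
    calc _ ≤ a * ((d + 1) * (a - b) * a ^ d) + (a - b) * a ^ (d + 1) := add_le_add h2 h3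
      _ = _ := by ring

lemma shell_card {d : ℕ} (hd : 1 ≤ d) (K k : ℕ) :
    ((((box d K).filter fun n => supNorm n = k).card : ℕ) : ℝ)
      ≤ 2 * d * (2 * (k : ℝ) + 1) ^ (d - 1) := by
  obtain ⟨e, rfl⟩ : ∃ e, d = e + 1 := ⟨d - 1, by omega⟩
  simp only [Nat.add_sub_cancel]
  rcases k with _ | k
  · have : ((box (e + 1) K).filter fun n => supNorm n = 0) ⊆ box (e + 1) 0 := by
      intro n hn
      rw [mem_box_iff]
      exact (Finset.mem_filter.1 hn).2.le
    have h := Finset.card_le_card this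
    rw [card_box] at h
    have h' : ((((box (e + 1) K).filter fun n => supNorm n = 0).card : ℕ) : ℝ) ≤ 1 := by
      exact_mod_cast (by simpa using h)
    refine h'.trans ?_
    have : (0 : ℝ) ≤ e := by positivity
    push_cast
    simp
    linarith
  · have hs : ((box (e + 1) K).filter fun n => supNorm n = k + 1) ⊆
        box (e + 1) (k + 1) \ box (e + 1) k := by
      intro n hn
      have := (Finset.mem_filter.1 hn).2
      rw [Finset.mem_sdiff, mem_box_iff, mem_box_iff]
      omega
    have h := Finset.card_le_card hs
    have hsub : box (e + 1) k ⊆ box (e + 1) (k + 1) := by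
      intro n hn
      rw [mem_box_iff] at *
      omega
    have h2 := Finset.card_sdiff_add_card_eq_card hsub
    rw [card_box, card_box] at h2
    have h2' : (((box (e + 1) (k + 1) \ box (e + 1) k).card : ℕ) : ℝ)
      = (2 * ((k : ℝ) + 1) + 1) ^ (e + 1) - (2 * (k : ℝ) + 1) ^ (e + 1) := by
      have : (((box (e + 1) (k + 1) \ box (e + 1) k).card : ℕ) : ℝ) + (2 * (k : ℝ) + 1) ^ (e + 1)
        = (2 * ((k : ℝ) + 1) + 1) ^ (e + 1) := by exact_mod_cast h2
      linarith
    have h3 := pow_diff_le e (2 * ((k : ℝ) + 1) + 1) (2 * (k : ℝ) + 1) (by positivity) (by linarith)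
    calc _ ≤ (((box (e + 1) (k + 1) \ box (e + 1) k).card : ℕ) : ℝ) := by exact_mod_cast h
      _ ≤ _ := by
        rw [h2']
        refine h3.trans (le_of_eq ?_)
        push_cast
        ring

lemma sum_box_le {d : ℕ} (hd : 1 ≤ d) (K : ℕ) (g : ℕ → ℝ) (hg : ∀ k, 0 ≤ g k) :
    ∑ n ∈ box d K, g (supNorm n)
      ≤ ∑ k ∈ Finset.range (K + 1), 2 * d * (2 * (k : ℝ) + 1) ^ (d - 1) * g k := by
  rw [← Finset.sum_fiberwise_of_maps_to (s := box d K) (t := Finset.range (K + 1))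
    (g := supNorm) (by intro n hn; rw [mem_box_iff] at hn; simp; omega)]
  refine Finset.sum_le_sum fun k _ => ?_
  rw [Finset.sum_congr rfl (g := fun _ => g k)
    (fun n hn => by rw [(Finset.mem_filter.1 hn).2])]
  rw [Finset.sum_const, nsmul_eq_mul]
  exact mul_le_mul_of_nonneg_right (shell_card hd K k) (hg k)

lemma inner_bound {d : ℕ} (hd : 1 ≤ d) (v : ℕ → ℝ) (hv : ∀ k, 0 ≤ v k)
    (hs : Summable fun j : ℕ => ((j : ℝ) + 1) ^ (d - 1) * v j) (N : ℕ) :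
    ∑ n ∈ box d N, v (N - supNorm n)
      ≤ 2 * d * (2 * (N : ℝ) + 1) ^ (d - 1) * ∑' j : ℕ, ((j : ℝ) + 1) ^ (d - 1) * v j := by
  refine (sum_box_le hd N (fun k => v (N - k)) (fun k => hv _)).trans ?_
  calc _ ≤ ∑ k ∈ Finset.range (N + 1), 2 * d * (2 * (N : ℝ) + 1) ^ (d - 1) * v (N - k) := by
        refine Finset.sum_le_sum fun k hk => ?_
        have hk' : (k : ℝ) ≤ N := by
          have := Finset.mem_range.1 hk
          exact_mod_cast (by omega : k ≤ N)
        have := hv (N - k)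
        gcongr
    _ = 2 * d * (2 * (N : ℝ) + 1) ^ (d - 1) * ∑ k ∈ Finset.range (N + 1), v k := by
        rw [← Finset.mul_sum]
        congr 1
        have := Finset.sum_range_reflect v (N + 1)
        simpa using this
    _ ≤ _ := by
        gcongr
        refine le_trans (Finset.sum_le_sum fun k _ => ?_)
          (hs.sum_le_tsum (Finset.range (N + 1)) (fun j _ => mul_nonneg (by positivity) (hv j)))
        exact le_mul_of_one_le_left (hv k) (one_le_pow₀ (by linarith [(k.cast_nonneg : (0 : ℝ) ≤ k)]))

lemma outer_bound {d : ℕ} (hd : 1 ≤ d) (v : ℕ → ℝ) (hv : ∀ k, 0 ≤ v k)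
    (hs : Summable fun j : ℕ => ((j : ℝ) + 1) ^ (d - 1) * v j) (N K : ℕ) :
    ∑ n ∈ box d K, (if supNorm n ≤ N then 0 else v (supNorm n - N - 1))
      ≤ 2 * d * (3 * (2 * (N : ℝ) + 1)) ^ (d - 1) *
        ∑' j : ℕ, ((j : ℝ) + 1) ^ (d - 1) * v j := by
  have hnn : ∀ k : ℕ, 0 ≤ (if k ≤ N then 0 else v (k - N - 1)) := by
    intro k
    split_ifs
    · exact le_rfl
    · exact hv _
  refine (sum_box_le hd K (fun k => if k ≤ N then 0 else v (k - N - 1)) hnn).trans ?_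
  calc _ ≤ ∑ k ∈ Finset.range ((N + 1) + (K + 1)),
          2 * d * (2 * (k : ℝ) + 1) ^ (d - 1) * (if k ≤ N then 0 else v (k - N - 1)) := by
        refine Finset.sum_le_sum_of_subset_of_nonneg ?_ ?_
        · intro k hk
          simp at *
          omega
        · intro k _ _
          exact mul_nonneg (by positivity) (hnn k)
    _ = ∑ j ∈ Finset.range (K + 1),
          2 * d * (2 * ((N + 1 + j : ℕ) : ℝ) + 1) ^ (d - 1) * v j := by
        rw [Finset.sum_range_add, Finset.sum_eq_zero, zero_add]
        · refine Finset.sum_congr rfl fun j _ => ?_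
          rw [if_neg (by omega)]
          congr 2
          omega
        · intro k hk
          rw [if_pos (by have := Finset.mem_range.1 hk; omega), mul_zero]
    _ ≤ ∑ j ∈ Finset.range (K + 1),
          2 * d * (3 * (2 * (N : ℝ) + 1)) ^ (d - 1) * (((j : ℝ) + 1) ^ (d - 1) * v j) := by
        refine Finset.sum_le_sum fun j _ => ?_
        rw [← mul_assoc, mul_assoc (2 * (d : ℝ)) (_ ^ (d - 1)) (_ ^ (d - 1)), ← mul_pow]
        have := hv j
        gcongr
        push_cast
        have h1 : (0 : ℝ) ≤ N := by positivity
        have h2 : (0 : ℝ) ≤ j := by positivity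
        nlinarith [mul_nonneg h1 h2]
    _ ≤ _ := by
        rw [← Finset.mul_sum]
        gcongr
        exact hs.sum_le_tsum _ (fun j _ => mul_nonneg (by positivity) (hv j))

lemma tail_small {d : ℕ} (hd : 1 ≤ d) (v : ℕ → ℝ) (hv : ∀ k, 0 ≤ v k) (ha : Antitone v)
    (hs : Summable fun j : ℕ => ((j : ℝ) + 1) ^ (d - 1) * v j) (N : ℕ) (ε : ℝ) (hε : 0 < ε) :
    ∃ j : ℕ, (2 * ((N + 2 * j : ℕ) : ℝ) + 1) ^ d * v (2 * j) < ε := by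
  obtain ⟨e, rfl⟩ : ∃ e, d = e + 1 := ⟨d - 1, by omega⟩
  simp only [Nat.add_sub_cancel] at hs
  have t1 := hs.hasSum.tendsto_sum_nat
  have t2 : Tendsto (fun j : ℕ => j + (j + 1)) atTop atTop :=
    tendsto_atTop_mono (fun j => by simp) tendsto_id
  have t3 := ((t1.comp t2).sub t1).const_mul ((2 * (N : ℝ) + 4) ^ (e + 1))
  rw [sub_self, mul_zero] at t3
  obtain ⟨j, hj⟩ := (t3.eventually (gt_mem_nhds hε)).exists
  refine ⟨j, lt_of_le_of_lt ?_ hj⟩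
  simp only [Function.comp]
  rw [Finset.sum_range_add, add_sub_cancel_left]
  have h1 : ((j : ℝ) + 1) ^ (e + 1) * v (2 * j)
      ≤ ∑ i ∈ Finset.range (j + 1), (((j + i : ℕ) : ℝ) + 1) ^ e * v (j + i) := by
    calc _ = ∑ i ∈ Finset.range (j + 1), ((j : ℝ) + 1) ^ e * v (2 * j) := by
          rw [Finset.sum_const, Finset.card_range, nsmul_eq_mul]
          push_cast
          ring
      _ ≤ _ := by
          refine Finset.sum_le_sum fun i hi => ?_
          have := Finset.mem_range.1 hi
          have h2 : v (2 * j) ≤ v (j + i) := ha (by omega)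
          have := hv (2 * j)
          push_cast
          gcongr
          linarith [(i.cast_nonneg : (0 : ℝ) ≤ i)]
  refine le_trans ?_ (mul_le_mul_of_nonneg_left h1 (by positivity))
  rw [← mul_assoc, ← mul_pow]
  have := hv (2 * j)
  gcongr
  push_cast
  have h1 : (0 : ℝ) ≤ N := by positivity
  have h2 : (0 : ℝ) ≤ j := by positivity
  nlinarith [mul_nonneg h1 h2]

/-- residue modulo `2K+1` in the box. -/
def res {d : ℕ} (K : ℕ) (m : Fin d → ℤ) : Fin d → ℤ := fun i => Int.bmod (m i) (2 * K + 1)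

lemma bmod_abs (K : ℕ) (z : ℤ) : |Int.bmod z (2 * K + 1)| ≤ (K : ℤ) := by
  have h1 := Int.le_bmod (x := z) (m := 2 * K + 1) (by omega)
  have h2 := Int.bmod_lt (x := z) (m := 2 * K + 1) (by omega)
  rw [abs_le]
  constructor <;> omega

lemma bmod_self (K : ℕ) (z : ℤ) (h : |z| ≤ K) : Int.bmod z (2 * K + 1) = z := by
  rw [abs_le] at h
  apply Int.bmod_eq_of_le <;> omega

lemma bmod_spec (K : ℕ) (z : ℤ) : ∃ q : ℤ, z = Int.bmod z (2 * K + 1) + (2 * K + 1) * q := by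
  refine ⟨Int.bdiv z (2 * K + 1), ?_⟩
  have := Int.bmod_add_bdiv z (2 * K + 1)
  push_cast at this
  exact this.symm

lemma bmod_add (K : ℕ) (z q : ℤ) :
    Int.bmod (z + (2 * K + 1) * q) (2 * K + 1) = Int.bmod z (2 * K + 1) := by
  have := Int.add_mul_bmod_self_left z (2 * K + 1) q
  push_cast at this
  exact this

lemma res_mem {d : ℕ} (K : ℕ) (m : Fin d → ℤ) : res K m ∈ box d K :=
  mem_box.2 fun i => bmod_abs K (m i)

lemma sum_periodic {d : ℕ} (K : ℕ) {M : Type*} [AddCommMonoid M] (f : (Fin d → ℤ) → M)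
    (hf : ∀ n q : Fin d → ℤ, f (n + (fun i => (2 * K + 1) * q i)) = f n) (a : Fin d → ℤ) :
    ∑ n ∈ box d K, f (n + a) = ∑ n ∈ box d K, f n := by
  refine Finset.sum_nbij' (fun n => res K (n + a)) (fun n => res K (n - a)) ?_ ?_ ?_ ?_ ?_
  · intro n _
    exact res_mem K _
  · intro n _
    exact res_mem K _
  · intro n hn
    funext i
    obtain ⟨q, hq⟩ := bmod_spec K (n i + a i)
    have hn := mem_box.1 hn i
    simp only [res, Pi.sub_apply, Pi.add_apply]
    have : Int.bmod (n i + a i) (2 * K + 1) - a i = n i + (2 * K + 1) * (-q) := by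
      linarith
    rw [this, bmod_add, bmod_self K _ hn]
  · intro n hn
    funext i
    obtain ⟨q, hq⟩ := bmod_spec K (n i - a i)
    have hn := mem_box.1 hn i
    simp only [res, Pi.sub_apply, Pi.add_apply]
    have : Int.bmod (n i - a i) (2 * K + 1) + a i = n i + (2 * K + 1) * (-q) := by
      linarith
    rw [this, bmod_add, bmod_self K _ hn]
  · intro n _
    choose q hq using fun i => bmod_spec K ((n + a) i)
    have : n + a = res K (n + a) + (fun i => (2 * K + 1) * q i) := by
      funext i
      exact hq i
    conv_lhs => rw [this]
    exact hf _ _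

section Meas

variable {d : ℕ} {A : Type} [Fintype A] [TopologicalSpace A] [DiscreteTopology A]
  [MeasurableSpace A] [BorelSpace A]

lemma exists_bound (φ : Cfg d A → ℝ) (hφ : Continuous φ) : ∃ M, ∀ x, |φ x| ≤ M := by
  obtain ⟨M, hM⟩ := isCompact_univ.exists_bound_of_continuousOn hφ.continuousOn
  exact ⟨M, fun x => hM x (Set.mem_univ x)⟩

lemma var_bdd (φ : Cfg d A → ℝ) (hφ : Continuous φ) (n : ℕ) :
    BddAbove { r | ∃ x y : Cfg d A,
    (∀ m : Fin d → ℤ, (∀ i, |m i| ≤ (n : ℤ)) → x m = y m) ∧ r = |φ x - φ y| } := by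
  obtain ⟨M, hM⟩ := exists_bound φ hφ
  refine ⟨M + M, ?_⟩
  rintro r ⟨x, y, -, rfl⟩
  exact (abs_sub _ _).trans (add_le_add (hM x) (hM y))

lemma le_var (φ : Cfg d A → ℝ) (hφ : Continuous φ) (n : ℕ) (x y : Cfg d A)
    (h : ∀ m : Fin d → ℤ, (∀ i, |m i| ≤ (n : ℤ)) → x m = y m) :
    |φ x - φ y| ≤ varPot φ n :=
  le_csSup (var_bdd φ hφ n) ⟨x, y, h, rfl⟩

lemma var_nonneg (φ : Cfg d A → ℝ) (n : ℕ) : 0 ≤ varPot φ n := by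
  apply Real.sSup_nonneg
  rintro r ⟨x, y, -, rfl⟩
  exact abs_nonneg _

lemma var_anti (φ : Cfg d A → ℝ) (hφ : Continuous φ) : Antitone (varPot φ) := by
  intro a b hab
  apply Real.sSup_le _ (var_nonneg φ a)
  rintro r ⟨x, y, h, rfl⟩
  refine le_var φ hφ a x y fun m hm => h m fun i => (hm i).trans ?_
  exact_mod_cast hab

lemma meas_shift (n : Fin d → ℤ) : Measurable (shift n : Cfg d A → Cfg d A) :=
  measurable_pi_lambda _ fun _ => measurable_pi_apply _

lemma cont_shift (n : Fin d → ℤ) : Continuous (shift n : Cfg d A → Cfg d A) :=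
  continuous_pi fun _ => continuous_apply _

lemma shift_shift (a b : Fin d → ℤ) (x : Cfg d A) : shift a (shift b x) = shift (b + a) x := by
  funext m
  simp [shift, add_assoc]

lemma integrable_comp (φ : Cfg d A → ℝ) (hφ : Continuous φ) (η : Measure (Cfg d A))
    [IsProbabilityMeasure η] (T : Cfg d A → Cfg d A) (hT : Measurable T) :
    Integrable (fun y => φ (T y)) η := by
  obtain ⟨M, hM⟩ := exists_bound φ hφ
  exact Integrable.of_bound (hφ.measurable.comp hT).aestronglyMeasurable M
    (Eventually.of_forall fun y => hM _)

lemma le_sPhi (φ : Cfg d A → ℝ) (hφ : Continuous φ) (η : Measure (Cfg d A))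
    (h1 : IsProbabilityMeasure η) (h2 : Invariant η) : ∫ x, φ x ∂η ≤ sPhi φ := by
  obtain ⟨M, hM⟩ := exists_bound φ hφ
  refine le_csSup ⟨M, ?_⟩ ⟨η, h1, h2, rfl⟩
  rintro r ⟨μ, h, -, rfl⟩
  have := norm_integral_le_of_norm_le_const (μ := μ) (f := φ) (C := M)
    (Eventually.of_forall fun y => hM _)
  simp at this
  exact (le_abs_self _).trans this

lemma integral_shift (φ : Cfg d A → ℝ) (hφ : Continuous φ) (η : Measure (Cfg d A))
    (h2 : Invariant η) (n : Fin d → ℤ) : ∫ x, φ (shift n x) ∂η = ∫ x, φ x ∂η := by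
  conv_rhs => rw [← h2 n]
  rw [integral_map (meas_shift n).aemeasurable hφ.measurable.aestronglyMeasurable]

lemma avg_le (φ : Cfg d A → ℝ) (hφ : Continuous φ) (η : Measure (Cfg d A))
    (h1 : IsProbabilityMeasure η) (h2 : Invariant η) (K : ℕ) (T : Cfg d A → Cfg d A)
    (hT : Measurable T)
    (hc : ∀ (q : Fin d → ℤ) (y : Cfg d A), T (shift (fun i => (2 * K + 1) * q i) y)
      = shift (fun i => (2 * K + 1) * q i) (T y)) :
    ∑ n ∈ box d K, ∫ y, φ (shift n (T y)) ∂η ≤ (2 * (K : ℝ) + 1) ^ d * sPhi φ := by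
  have hm : ∀ n : Fin d → ℤ, Measurable fun y => shift n (T y) := fun n => (meas_shift n).comp hT
  let τ : Measure (Cfg d A) := ∑ n ∈ box d K, Measure.map (fun y => shift n (T y)) η
  have hcard : ((box d K).card : ℝ) = (2 * (K : ℝ) + 1) ^ d := by
    rw [card_box]; push_cast; rfl
  have hpos : (0 : ℝ) < (2 * (K : ℝ) + 1) ^ d := by positivity
  have hτ : ∀ s, MeasurableSet s → τ s = ∑ n ∈ box d K, η ((fun y => shift n (T y)) ⁻¹' s) := by
    intro s hs
    simp only [τ, Measure.coe_finsetSum, Finset.sum_apply]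
    exact Finset.sum_congr rfl fun n _ => Measure.map_apply (hm n) hs
  have hinv : Invariant τ := by
    intro a
    ext s hs
    rw [Measure.map_apply (meas_shift a) hs, hτ _ hs, hτ _ (meas_shift a hs)]
    have := sum_periodic K (fun n => η ((fun y => shift n (T y)) ⁻¹' s)) (by
      intro n q
      conv_rhs => rw [← h2 (fun i => (2 * K + 1) * q i)]
      rw [Measure.map_apply (meas_shift _) (hm n hs)]
      congr 1
      ext y
      simp only [Set.mem_preimage, hc, shift_shift]
      rw [add_comm]) a
    rw [← this]
    refine Finset.sum_congr rfl fun n _ => ?_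
    congr 1
    ext y
    simp only [Set.mem_preimage, shift_shift]
  have huniv : τ Set.univ = ((box d K).card : ℝ≥0∞) := by
    rw [hτ _ MeasurableSet.univ]
    simp
  have hc0 : ((box d K).card : ℝ≥0∞) ≠ 0 := by
    rw [card_box]
    simp
  have hp : IsProbabilityMeasure (((box d K).card : ℝ≥0∞)⁻¹ • τ) := by
    constructor
    rw [Measure.smul_apply, huniv, smul_eq_mul]
    exact ENNReal.inv_mul_cancel hc0 (ENNReal.natCast_ne_top _)
  have hi : Invariant (((box d K).card : ℝ≥0∞)⁻¹ • τ) := by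
    intro a
    rw [Measure.map_smul, hinv a]
  have hle := le_sPhi φ hφ _ hp hi
  rw [integral_smul_measure] at hle
  have hint : ∫ x, φ x ∂τ = ∑ n ∈ box d K, ∫ y, φ (shift n (T y)) ∂η := by
    simp only [τ]
    rw [integral_finsetSum_measure]
    · refine Finset.sum_congr rfl fun n _ => ?_
      rw [integral_map (hm n).aemeasurable hφ.measurable.aestronglyMeasurable]
    · intro n _
      haveI : IsProbabilityMeasure (Measure.map (fun y => shift n (T y)) η) :=
        Measure.isProbabilityMeasure_map (hm n).aemeasurable
      exact integrable_comp φ hφ _ id measurable_id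
  rw [hint, ENNReal.toReal_inv, ENNReal.toReal_natCast, hcard, smul_eq_mul,
    inv_mul_le_iff₀ hpos] at hle
  exact hle

/-- The replacement map. -/
noncomputable def repl (N K : ℕ) (x x' : Cfg d A) (y : Cfg d A) : Cfg d A := fun m =>
  if res K m ∈ box d N ∧ ∀ k ∈ box d N, y (m - res K m + k) = x k then x' (res K m) else y m

lemma meas_repl (N K : ℕ) (x x' : Cfg d A) : Measurable (repl N K x x') := by
  refine measurable_pi_lambda _ fun m => ?_
  refine Measurable.ite ?_ measurable_const (measurable_pi_apply m)
  have h0 : {y : Cfg d A | res K m ∈ box d N ∧ ∀ k ∈ box d N, y (m - res K m + k) = x k}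
      = {_y : Cfg d A | res K m ∈ box d N} ∩
        {y : Cfg d A | ∀ k ∈ box d N, y (m - res K m + k) = x k} := by
    ext y
    simp
  rw [h0]
  refine MeasurableSet.inter (MeasurableSet.const _) ?_
  have : {y : Cfg d A | ∀ k ∈ box d N, y (m - res K m + k) = x k}
      = ⋂ k ∈ box d N, (fun y : Cfg d A => y (m - res K m + k)) ⁻¹' {x k} := by
    ext y
    simp
  rw [this]
  exact Finset.measurableSet_biInter _ fun k _ =>
    measurable_pi_apply _ (measurableSet_singleton _)

lemma repl_shift (N K : ℕ) (x x' : Cfg d A) (q : Fin d → ℤ) (y : Cfg d A) :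
    repl N K x x' (shift (fun i => (2 * K + 1) * q i) y)
      = shift (fun i => (2 * K + 1) * q i) (repl N K x x' y) := by
  funext m
  have h : res K ((fun i => (2 * K + 1) * q i) + m) = res K m := by
    funext i
    simp only [res, Pi.add_apply]
    rw [add_comm, bmod_add]
  simp only [repl, shift, h]
  have h2 : ∀ k, (fun i => (2 * (K : ℤ) + 1) * q i) + (m - res K m + k)
      = (fun i => (2 * (K : ℤ) + 1) * q i) + m - res K m + k := by
    intro k; abel
  simp only [h2]

lemma repl_eq_self {N K : ℕ} (hNK : N ≤ K) (x x' y : Cfg d A) (m : Fin d → ℤ)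
    (hm : ∀ i, |m i| ≤ 2 * (K : ℤ) - N)
    (h : m ∉ box d N ∨ ¬ ∀ k ∈ box d N, y k = x k) : repl N K x x' y m = y m := by
  rw [repl, if_neg]
  rintro ⟨h1, h2⟩
  have hr : res K m = m := by
    funext i
    obtain ⟨q, hq⟩ := bmod_spec K (m i)
    have e1 := mem_box.1 h1 i
    have e2 := hm i
    simp only [res] at e1 ⊢
    rw [abs_le] at e1 e2
    have : q = 0 := by
      by_contra hq0
      rcases lt_or_gt_of_ne hq0 with h' | h'
      · have : (2 * (K : ℤ) + 1) * q ≤ (2 * K + 1) * (-1) :=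
          mul_le_mul_of_nonneg_left (by omega) (by omega)
        omega
      · have : (2 * (K : ℤ) + 1) * 1 ≤ (2 * K + 1) * q :=
          mul_le_mul_of_nonneg_left (by omega) (by omega)
        omega
    rw [this] at hq
    linarith
  rw [hr] at h1 h2
  rcases h with h | h
  · exact h h1
  · exact h fun k hk => by simpa using h2 k hk

lemma repl_eq_new {N K : ℕ} (hNK : N ≤ K) (x x' y : Cfg d A) (m : Fin d → ℤ)
    (hm : m ∈ box d N) (h : ∀ k ∈ box d N, y k = x k) : repl N K x x' y m = x' m := by
  have hr : res K m = m := by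
    funext i
    refine bmod_self K _ ((mem_box.1 hm i).trans ?_)
    exact_mod_cast hNK
  rw [repl, hr, if_pos]
  exact ⟨hm, fun k hk => by simpa using h k hk⟩

lemma cyl_meas (η : Measure (Cfg d A)) (h2 : Invariant η) (N : ℕ) (x : Cfg d A) :
    η {y | ∀ k ∈ box d N, y k = x k}
      = η (cylE (2 * N + 1) fun m => x (fun i => ((m i : ℕ) : ℤ) - N)) := by
  conv_rhs => rw [← h2 (fun _ => -(N : ℤ))]
  have hms : MeasurableSet
      (cylE (d := d) (2 * N + 1) fun m => x (fun i => ((m i : ℕ) : ℤ) - N)) := by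
    have : (cylE (d := d) (2 * N + 1) fun m => x (fun i => ((m i : ℕ) : ℤ) - N))
      = ⋂ m : Fin d → Fin (2 * N + 1), (fun y : Cfg d A => y (fun i => ((m i : ℕ) : ℤ))) ⁻¹'
        {x (fun i => ((m i : ℕ) : ℤ) - N)} := by
      ext y
      simp [cylE]
    rw [this]
    exact MeasurableSet.iInter fun m => measurable_pi_apply _ (measurableSet_singleton _)
  rw [Measure.map_apply (meas_shift _) hms]
  congr 1
  ext y
  simp only [Set.mem_setOf_eq, Set.mem_preimage, cylE, shift]
  constructor
  · intro h m
    have e : ((fun _ => -(N : ℤ)) + fun i => ((m i : ℕ) : ℤ)) = fun i => ((m i : ℕ) : ℤ) - N := by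
      funext i
      simp only [Pi.add_apply]
      ring
    rw [e]
    apply h
    rw [mem_box]
    intro i
    have := (m i).2
    rw [abs_le]
    constructor <;> omega
  · intro h k hk
    rw [mem_box] at hk
    have hk' : ∀ i, -(N : ℤ) ≤ k i ∧ k i ≤ N := fun i => abs_le.1 (hk i)
    have := h (fun i => ⟨(k i + N).toNat, by have := hk' i; omega⟩)
    have e1 : ((fun _ => -(N : ℤ)) + fun i => (((k i + N).toNat : ℕ) : ℤ)) = k := by
      funext i
      have := hk' i
      simp only [Pi.add_apply]
      omega
    have e2 : (fun i => (((k i + N).toNat : ℕ) : ℤ) - N) = k := by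
      funext i
      have := hk' i
      omega
    simp only [e1, e2] at this
    exact this

lemma gain_in (hd : 1 ≤ d) (φ : Cfg d A → ℝ) (hφ : Continuous φ) {N K : ℕ} (hNK : N ≤ K)
    (x x' y : Cfg d A) (h : ∀ k ∈ box d N, y k = x k) :
    ∑ n ∈ box d N, (φ (shift n x') - φ (shift n x))
      - 2 * ∑ n ∈ box d N, varPot φ (N - supNorm n)
      - ∑ n ∈ box d K, (if supNorm n ≤ N then 0 else varPot φ (supNorm n - N - 1))
    ≤ ∑ n ∈ box d K, (φ (shift n (repl N K x x' y)) - φ (shift n y)) := by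
  have hsub : (box d K).filter (fun n => supNorm n ≤ N) = box d N := by
    ext n
    simp only [Finset.mem_filter, mem_box_iff]
    omega
  rw [← Finset.sum_filter_add_sum_filter_not (box d K) (fun n => supNorm n ≤ N)
    (fun n => φ (shift n (repl N K x x' y)) - φ (shift n y)), hsub]
  have h1 : ∑ n ∈ box d N, (φ (shift n x') - φ (shift n x))
      - 2 * ∑ n ∈ box d N, varPot φ (N - supNorm n)
      ≤ ∑ n ∈ box d N, (φ (shift n (repl N K x x' y)) - φ (shift n y)) := by
    rw [Finset.mul_sum, ← Finset.sum_sub_distrib]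
    refine Finset.sum_le_sum fun n hn => ?_
    rw [mem_box_iff] at hn
    have hin : ∀ m : Fin d → ℤ, (∀ i, |m i| ≤ ((N - supNorm n : ℕ) : ℤ)) → n + m ∈ box d N := by
      intro m hm
      rw [mem_box]
      intro i
      have e1 := hm i
      have e2 := natAbs_le_supNorm n i
      simp only [Pi.add_apply]
      rw [abs_le] at e1 ⊢
      omega
    have e1 := le_var φ hφ (N - supNorm n) (shift n (repl N K x x' y)) (shift n x')
      (fun m hm => repl_eq_new hNK x x' y _ (hin m hm) h)
    have e2 := le_var φ hφ (N - supNorm n) (shift n y) (shift n x)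
      (fun m hm => h _ (hin m hm))
    rw [abs_le] at e1 e2
    linarith [e1.1, e2.2]
  have h2 : - ∑ n ∈ box d K, (if supNorm n ≤ N then 0 else varPot φ (supNorm n - N - 1))
      ≤ ∑ n ∈ (box d K).filter (fun n => ¬ supNorm n ≤ N),
        (φ (shift n (repl N K x x' y)) - φ (shift n y)) := by
    rw [Finset.sum_filter, ← Finset.sum_neg_distrib]
    refine Finset.sum_le_sum fun n hn => ?_
    rw [mem_box_iff] at hn
    by_cases hnN : supNorm n ≤ N
    · simp [hnN]
    · simp only [hnN, if_false, not_false_eq_true, if_true]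
      obtain ⟨i0, hi0⟩ := exists_supNorm hd n
      have e1 := le_var φ hφ (supNorm n - N - 1) (shift n (repl N K x x' y)) (shift n y)
        (fun m hm => repl_eq_self hNK x x' y _ (by
          intro i
          have e1 := hm i
          have e2 := natAbs_le_supNorm n i
          simp only [Pi.add_apply]
          rw [abs_le] at e1 ⊢
          omega) (Or.inl (by
          intro hmem
          have e1 := hm i0
          have e2 := mem_box.1 hmem i0
          simp only [Pi.add_apply] at e2
          rw [abs_le] at e1 e2
          omega)))
      exact (abs_le.1 e1).1
  linarith

lemma gain_out (φ : Cfg d A → ℝ) (hφ : Continuous φ) {N K : ℕ} (hNK : N ≤ K)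
    (x x' y : Cfg d A) (h : ¬ ∀ k ∈ box d N, y k = x k) :
    - ((2 * (K : ℝ) + 1) ^ d * varPot φ (K - N))
    ≤ ∑ n ∈ box d K, (φ (shift n (repl N K x x' y)) - φ (shift n y)) := by
  have : - ((2 * (K : ℝ) + 1) ^ d * varPot φ (K - N)) = ∑ n ∈ box d K, - varPot φ (K - N) := by
    rw [Finset.sum_const, card_box, nsmul_eq_mul]
    push_cast
    ring
  rw [this]
  refine Finset.sum_le_sum fun n hn => ?_
  rw [mem_box] at hn
  have e1 := le_var φ hφ (K - N) (shift n (repl N K x x' y)) (shift n y)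
    (fun m hm => repl_eq_self hNK x x' y _ (by
      intro i
      have e1 := hm i
      have e2 := hn i
      simp only [Pi.add_apply]
      rw [abs_le] at e1 e2 ⊢
      omega) (Or.inr h))
  exact (abs_le.1 e1).1

lemma core (hd : 1 ≤ d) (φ : Cfg d A → ℝ) (hφ : Continuous φ)
    (hsum : Summable fun n : ℕ => ((n + 1 : ℕ) : ℝ) ^ (d - 1) * varPot φ (n + 1))
    (μ ν : Measure (Cfg d A)) (hμ : IsProbabilityMeasure μ) (hμi : Invariant μ)
    (hν : IsProbabilityMeasure ν) (hνi : Invariant ν) (hlt : (∫ x, φ x ∂ν) < ∫ x, φ x ∂μ) :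
    ∃ n : ℕ, 1 ≤ n ∧ ∃ W : (Fin d → Fin n) → A, ∀ η ∈ MM φ, η (cylE n W) = 0 := by
  set v := varPot φ with hv
  have hv0 : ∀ k, 0 ≤ v k := var_nonneg φ
  have hs : Summable fun j : ℕ => ((j : ℝ) + 1) ^ (d - 1) * v j := by
    rw [← summable_nat_add_iff 1]
    refine Summable.of_nonneg_of_le (fun j => mul_nonneg (by positivity) (hv0 _)) (fun j => ?_)
      (hsum.mul_left ((2 : ℝ) ^ (d - 1)))
    rw [← mul_assoc, ← mul_pow]
    have := hv0 (j + 1)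
    gcongr
    push_cast
    linarith [(j.cast_nonneg : (0 : ℝ) ≤ j)]
  set S := ∑' j : ℕ, ((j : ℝ) + 1) ^ (d - 1) * v j with hS
  set γ := (∫ x, φ x ∂μ) - ∫ x, φ x ∂ν with hγ
  have hγ0 : 0 < γ := sub_pos.2 hlt
  obtain ⟨N, hN⟩ := exists_nat_gt ((2 * (2 * d * S) + 2 * d * 3 ^ (d - 1) * S) / γ)
  rw [div_lt_iff₀ hγ0] at hN
  have hcard : ((box d N).card : ℝ) = (2 * (N : ℝ) + 1) ^ d := by
    rw [card_box]; push_cast; rfl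
  have hpt : ∀ (ρ : Measure (Cfg d A)), IsProbabilityMeasure ρ → Invariant ρ →
      Integrable (fun x => ∑ n ∈ box d N, φ (shift n x)) ρ ∧
      ∫ x, ∑ n ∈ box d N, φ (shift n x) ∂ρ = (2 * (N : ℝ) + 1) ^ d * ∫ x, φ x ∂ρ := by
    intro ρ h1 h2
    have hi : ∀ n ∈ box d N, Integrable (fun x => φ (shift n x)) ρ := fun n _ =>
      integrable_comp φ hφ ρ (shift n) (meas_shift n)
    refine ⟨integrable_finsetSum _ hi, ?_⟩
    rw [integral_finsetSum _ hi, Finset.sum_congr rfl (fun n _ => integral_shift φ hφ ρ h2 n),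
      Finset.sum_const, nsmul_eq_mul, hcard]
  obtain ⟨x, hx⟩ := exists_le_integral (hpt ν hν hνi).1
  obtain ⟨x', hx'⟩ := exists_integral_le (hpt μ hμ hμi).1
  rw [(hpt ν hν hνi).2] at hx
  rw [(hpt μ hμ hμi).2] at hx'
  refine ⟨2 * N + 1, by omega, fun m => x (fun i => ((m i : ℕ) : ℤ) - N), ?_⟩
  rintro η ⟨hη, hηi, hηmax⟩
  rw [← cyl_meas η hηi N x]
  set C : Set (Cfg d A) := {y | ∀ k ∈ box d N, y k = x k} with hC
  by_contra hne
  have hp : 0 < (η C).toReal := ENNReal.toReal_pos hne (measure_ne_top _ _)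
  -- the net gain
  set g : ℝ := (2 * (N : ℝ) + 1) ^ d * γ - 2 * (2 * d * (2 * (N : ℝ) + 1) ^ (d - 1) * S)
    - 2 * d * (3 * (2 * (N : ℝ) + 1)) ^ (d - 1) * S with hg
  have hg0 : 0 < g := by
    have e : (2 * (N : ℝ) + 1) ^ d = (2 * (N : ℝ) + 1) ^ (d - 1) * (2 * N + 1) := by
      rw [← pow_succ]
      congr 1
      omega
    have : g = (2 * (N : ℝ) + 1) ^ (d - 1) *
        ((2 * N + 1) * γ - (2 * (2 * d * S) + 2 * d * 3 ^ (d - 1) * S)) := by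
      rw [hg, e, mul_pow]
      ring
    rw [this]
    apply mul_pos (by positivity)
    have hN0 : (0 : ℝ) ≤ N := by positivity
    nlinarith [mul_nonneg hN0 hγ0.le]
  obtain ⟨j, hj⟩ := tail_small hd v hv0 (var_anti φ hφ) hs N ((η C).toReal * g) (mul_pos hp hg0)
  set K := N + 2 * j with hK
  have hNK : N ≤ K := by omega
  have hKN : K - N = 2 * j := by omega
  set e := (2 * (K : ℝ) + 1) ^ d * v (2 * j) with he
  have he0 : 0 ≤ e := mul_nonneg (by positivity) (hv0 _)
  have hCm : MeasurableSet C := by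
    have : C = ⋂ k ∈ box d N, (fun y : Cfg d A => y k) ⁻¹' {x k} := by
      ext y
      simp [hC]
    rw [this]
    exact Finset.measurableSet_biInter _ fun k _ =>
      measurable_pi_apply _ (measurableSet_singleton _)
  have hpw : ∀ y, C.indicator (fun _ => g) y - e
      ≤ ∑ n ∈ box d K, (φ (shift n (repl N K x x' y)) - φ (shift n y)) := by
    intro y
    by_cases hy : y ∈ C
    · rw [Set.indicator_of_mem hy]
      have h1 := gain_in hd φ hφ hNK x x' y hy
      have h2 := inner_bound hd v hv0 hs N
      have h3 := outer_bound hd v hv0 hs N K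
      rw [Finset.sum_sub_distrib] at h1
      have h4 : (2 * (N : ℝ) + 1) ^ d * γ = (2 * (N : ℝ) + 1) ^ d * (∫ x, φ x ∂μ)
        - (2 * (N : ℝ) + 1) ^ d * ∫ x, φ x ∂ν := by rw [hγ]; ring
      linarith
    · rw [Set.indicator_of_notMem hy]
      have h1 := gain_out φ hφ hNK x x' y hy
      rw [hKN] at h1
      linarith
  have hi1 : ∀ n ∈ box d K, Integrable (fun y => φ (shift n (repl N K x x' y))) η := fun n _ =>
    integrable_comp φ hφ η (fun y => shift n (repl N K x x' y))
      ((meas_shift n).comp (meas_repl N K x x'))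
  have hi2 : ∀ n ∈ box d K, Integrable (fun y => φ (shift n y)) η := fun n _ =>
    integrable_comp φ hφ η (shift n) (meas_shift n)
  have hi3 : Integrable (C.indicator (fun _ => g)) η := (integrable_const g).indicator hCm
  have hi4 : ∀ n ∈ box d K,
      Integrable (fun y => φ (shift n (repl N K x x' y)) - φ (shift n y)) η := fun n hn =>
    (hi1 n hn).sub (hi2 n hn)
  have hmono := integral_mono (μ := η) (hi3.sub (integrable_const e))
    (integrable_finsetSum _ hi4) hpw
  have hL : ∫ y, (C.indicator (fun _ => g) y - e) ∂η = (η C).toReal * g - e := by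
    rw [integral_sub hi3 (integrable_const e), integral_indicator_const g hCm]
    simp [Measure.real]
  have hR : ∫ y, ∑ n ∈ box d K, (φ (shift n (repl N K x x' y)) - φ (shift n y)) ∂η
      = ∑ n ∈ box d K, ∫ y, φ (shift n (repl N K x x' y)) ∂η
        - (2 * (K : ℝ) + 1) ^ d * sPhi φ := by
    rw [integral_finsetSum _ hi4,
      Finset.sum_congr rfl (fun n hn => integral_sub (hi1 n hn) (hi2 n hn)),
      Finset.sum_sub_distrib]
    congr 1
    rw [Finset.sum_congr rfl (fun n _ => integral_shift φ hφ η hηi n), Finset.sum_const,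
      nsmul_eq_mul, card_box, hηmax]
    push_cast
    rfl
  have havg := avg_le φ hφ η hη hηi K (repl N K x x') (meas_repl N K x x') (repl_shift N K x x')
  have : (η C).toReal * g - e ≤ 0 := by
    rw [← hL]
    refine hmono.trans ?_
    rw [hR]
    linarith
  linarith

end Meas

/-- **Proposition 4.2.** If `Σ_{n ≥ 1} n^{d-1} var_n φ < ∞` and `∫ φ` is not
constant over shift-invariant probability measures, then some cylinder set is null for every
maximizing measure of `φ`. -/
theorem statement10 (d : ℕ) (hd : 1 ≤ d) (A : Type) [Fintype A] [TopologicalSpace A]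
    [DiscreteTopology A] [MeasurableSpace A] [BorelSpace A]
    (φ : Cfg d A → ℝ) (hφ : Continuous φ)
    (hsum : Summable fun n : ℕ => ((n + 1 : ℕ) : ℝ) ^ (d - 1) * varPot φ (n + 1))
    (hneq : ∃ μ ν : Measure (Cfg d A), IsProbabilityMeasure μ ∧ Invariant μ ∧
      IsProbabilityMeasure ν ∧ Invariant ν ∧ (∫ x, φ x ∂μ) ≠ ∫ x, φ x ∂ν) :
    ∃ n : ℕ, 1 ≤ n ∧ ∃ W : (Fin d → Fin n) → A, ∀ η ∈ MM φ, η (cylE n W) = 0 := by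
  obtain ⟨μ, ν, hμ, hμi, hν, hνi, hne⟩ := hneq
  rcases lt_or_gt_of_ne hne with h | h
  · exact core hd φ hφ hsum ν μ hν hνi hμ hμi h
  · exact core hd φ hφ hsum μ ν hμ hμi hν hνi h

end Freezing
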